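/- Let S ⊆ ℝⁿ be a convex set, let D be a map from S to real symmetric positive definite n×n matrices satisfying the self-concordance inequality on S, and let r : ℝⁿ → ℝⁿ be differentiable on S with Fréchet derivative D(z) at each z ∈ S. Let y ∈ S, set n(y) := −D(y)⁻¹ r(y), y⁺ := y + n(y), and n(y⁺) := −D(y⁺)⁻¹ r(y⁺). If ‖n(y)‖_{D(y)} ≤ 1/4 and the segment [y, y⁺] is contained in S, then ‖n(y⁺)‖_{D(y⁺)} ≤ 1/9. -/

import Mathlib

open Matrix

/-- The Hessian norm `‖z‖_H = √(zᵀ H z)` associated with a matrix `H`. -/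
noncomputable def hnorm {ι : Type*} [Fintype ι] (H : Matrix ι ι ℝ) (z : ι → ℝ) : ℝ :=
  Real.sqrt (z ⬝ᵥ H.mulVec z)

/-- A matrix-valued map `D` satisfies the self-concordance inequality on `S`. -/
def SelfConcordantOn {n : ℕ} (S : Set (Fin n → ℝ))
    (D : (Fin n → ℝ) → Matrix (Fin n) (Fin n) ℝ) : Prop :=
  ∀ y₁ ∈ S, ∀ y₂ ∈ S, hnorm (D y₁) (y₂ - y₁) < 1 →
    ∀ v : Fin n → ℝ, hnorm (D y₂) v ≤ hnorm (D y₁) v / (1 - hnorm (D y₁) (y₂ - y₁))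


lemma hnorm_nonneg' {n : ℕ} (H : Matrix (Fin n) (Fin n) ℝ) (z : Fin n → ℝ) : 0 ≤ hnorm H z :=
  Real.sqrt_nonneg _

lemma hnorm_sq' {n : ℕ} {H : Matrix (Fin n) (Fin n) ℝ} (hH : H.PosDef) (z : Fin n → ℝ) :
    hnorm H z ^ 2 = z ⬝ᵥ H.mulVec z := by
  unfold hnorm
  apply Real.sq_sqrt
  simpa using hH.posSemidef.dotProduct_mulVec_nonneg z

lemma hnorm_smul' {n : ℕ} (H : Matrix (Fin n) (Fin n) ℝ) (a : ℝ) (z : Fin n → ℝ) :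
    hnorm H (a • z) = |a| * hnorm H z := by
  unfold hnorm
  have : (a • z) ⬝ᵥ H.mulVec (a • z) = a ^ 2 * (z ⬝ᵥ H.mulVec z) := by
    simp only [Matrix.mulVec_smul, smul_dotProduct, dotProduct_smul, smul_eq_mul]; ring
  rw [this, Real.sqrt_mul (sq_nonneg a), Real.sqrt_sq_eq_abs]

lemma hnorm_eq_zero' {n : ℕ} {H : Matrix (Fin n) (Fin n) ℝ} (hH : H.PosDef) (z : Fin n → ℝ)
    (h : hnorm H z = 0) : z = 0 := by
  by_contra hz
  have h1 := hH.dotProduct_mulVec_pos hz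
  have h2 := hnorm_sq' hH z
  rw [h] at h2
  simp at h1
  linarith

lemma symm_form' {n : ℕ} {H : Matrix (Fin n) (Fin n) ℝ} (hH : H.PosDef) (w d : Fin n → ℝ) :
    d ⬝ᵥ H.mulVec w = w ⬝ᵥ H.mulVec d := by
  have h : Hᵀ = H := by simpa using hH.isHermitian.eq
  rw [Matrix.dotProduct_mulVec, ← Matrix.mulVec_transpose, h, dotProduct_comm]

/-- Cauchy-Schwarz for the difference of two forms. -/
lemma form_diff_le {n : ℕ} {H K : Matrix (Fin n) (Fin n) ℝ} (hH : H.PosDef) (hK : K.PosDef)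
    (c : ℝ) (hc : ∀ v, hnorm K v ^ 2 - hnorm H v ^ 2 ≤ c * hnorm H v ^ 2)
    (hc' : ∀ v, hnorm H v ^ 2 - hnorm K v ^ 2 ≤ c * hnorm H v ^ 2) (w d : Fin n → ℝ) :
    w ⬝ᵥ K.mulVec d - w ⬝ᵥ H.mulVec d ≤ c * (hnorm H w * hnorm H d) := by
  set a := hnorm H d with ha
  set b := hnorm H w with hb
  rcases (hnorm_nonneg' H d).eq_or_lt with h0 | ha0
  · have := hnorm_eq_zero' hH d h0.symm
    rw [ha, ← h0, this]; simp
  rcases (hnorm_nonneg' H w).eq_or_lt with h0 | hb0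
  · have := hnorm_eq_zero' hH w h0.symm
    rw [hb, ← h0, this]; simp
  rw [← ha] at ha0
  rw [← hb] at hb0
  have h1 := hc (a • w + b • d)
  have h2 := hc' (a • w - b • d)
  have ea := hnorm_sq' hH d
  have eb := hnorm_sq' hH w
  rw [← ha] at ea
  rw [← hb] at eb
  rw [hnorm_sq' hH, hnorm_sq' hK] at h1 h2
  simp only [Matrix.mulVec_add, Matrix.mulVec_sub, Matrix.mulVec_smul, add_dotProduct,
    sub_dotProduct, dotProduct_add, dotProduct_sub,
    smul_dotProduct, dotProduct_smul, smul_eq_mul, symm_form' hH w d, symm_form' hK w d,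
    ← ea, ← eb] at h1 h2
  have h3 : 0 ≤ (4 * (a * b)) * (c * (b * a) - (w ⬝ᵥ K.mulVec d - w ⬝ᵥ H.mulVec d)) := by
    nlinarith
  have h4 := nonneg_of_mul_nonneg_right h3 (by positivity)
  linarith

section
variable {n : ℕ} {S : Set (Fin n → ℝ)} {D : (Fin n → ℝ) → Matrix (Fin n) (Fin n) ℝ}
  {y d : Fin n → ℝ}

lemma sc_upper (hSC : SelfConcordantOn S D)
    (hseg : ∀ t ∈ Set.Icc (0 : ℝ) 1, y + t • d ∈ S) (hδ : hnorm (D y) d ≤ 1 / 4)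
    (t : ℝ) (ht : t ∈ Set.Icc (0 : ℝ) 1) (v : Fin n → ℝ) :
    hnorm (D (y + t • d)) v ≤ hnorm (D y) v / (1 - t * hnorm (D y) d) := by
  have h0 := hnorm_nonneg' (D y) d
  have hy : y ∈ S := by simpa using hseg 0 (by simp)
  have e : hnorm (D y) (y + t • d - y) = t * hnorm (D y) d := by
    rw [add_sub_cancel_left, hnorm_smul', abs_of_nonneg ht.1]
  have := hSC y hy _ (hseg t ht) (by rw [e]; nlinarith [ht.1, ht.2]) v
  rwa [e] at this

/-- One backward step. -/
lemma sc_step (hSC : SelfConcordantOn S D)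
    (hseg : ∀ t ∈ Set.Icc (0 : ℝ) 1, y + t • d ∈ S) (hδ : hnorm (D y) d ≤ 1 / 4)
    (s t : ℝ) (hs : s ∈ Set.Icc (0 : ℝ) 1) (ht : t ∈ Set.Icc (0 : ℝ) 1) (hst : s ≤ t)
    (v : Fin n → ℝ) :
    hnorm (D (y + s • d)) v * (1 - (2 * t - s) * hnorm (D y) d) ≤
      hnorm (D (y + t • d)) v * (1 - t * hnorm (D y) d) := by
  have hu := sc_upper hSC hseg hδ t ht d
  set δ := hnorm (D y) d with hd
  have h0 : 0 ≤ δ := hnorm_nonneg' (D y) d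
  have hp : 0 < 1 - t * δ := by nlinarith [ht.1, ht.2]
  have e : hnorm (D (y + t • d)) (y + s • d - (y + t • d)) = (t - s) * hnorm (D (y + t • d)) d := by
    have : y + s • d - (y + t • d) = (s - t) • d := by rw [sub_smul]; abel
    rw [this, hnorm_smul', abs_of_nonpos (by linarith)]; ring
  rw [le_div_iff₀ hp] at hu
  have hn := hnorm_nonneg' (D (y + t • d)) d
  set q := hnorm (D (y + t • d)) d
  have hq : q ≤ 1 / 3 := by nlinarith [ht.1, ht.2]
  have hlt : (t - s) * q < 1 := by nlinarith [ht.1, ht.2, hs.1, hs.2]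
  have := hSC _ (hseg t ht) _ (hseg s hs) (by rw [e]; exact hlt) v
  rw [e, le_div_iff₀ (by linarith)] at this
  have hv := hnorm_nonneg' (D (y + s • d)) v
  have k1 : hnorm (D (y + s • d)) v * (1 - (2 * t - s) * δ) ≤
      hnorm (D (y + s • d)) v * (1 - (t - s) * q) * (1 - t * δ) := by
    rw [mul_assoc]
    apply mul_le_mul_of_nonneg_left _ hv
    nlinarith [mul_le_mul_of_nonneg_left hu (sub_nonneg.2 hst)]
  exact k1.trans (mul_le_mul_of_nonneg_right this hp.le)

lemma sc_iter (hSC : SelfConcordantOn S D)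
    (hseg : ∀ t ∈ Set.Icc (0 : ℝ) 1, y + t • d ∈ S) (hδ : hnorm (D y) d ≤ 1 / 4)
    (v : Fin n → ℝ) (N : ℕ) (hN : 0 < N) (k : ℕ) (hk : k ≤ N) :
    hnorm (D y) v * (1 - (k + 1) / N * hnorm (D y) d) ≤
      hnorm (D (y + ((k : ℝ) / N) • d)) v * (1 - 1 / N * hnorm (D y) d) := by
  have hN' : (1 : ℝ) ≤ N := by exact_mod_cast hN
  have h0 : 0 ≤ hnorm (D y) d := hnorm_nonneg' (D y) d
  induction k with
  | zero => simp
  | succ k ih =>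
    have hk' : (k : ℝ) + 1 ≤ N := by exact_mod_cast hk
    have hk1 : ((k : ℝ) + 1) / N ≤ 1 := by rw [div_le_one (by linarith)]; exact hk'
    have hk0 : (k : ℝ) / N ≤ (k + 1) / N := by gcongr; linarith
    have h1N : 1 / (N : ℝ) ≤ 1 := by rw [div_le_one (by linarith)]; exact hN'
    have h1N0 : 0 ≤ 1 / (N : ℝ) := by positivity
    have hkk : 0 ≤ (k : ℝ) / N := by positivity
    have i := ih (by omega)
    have st := sc_step hSC hseg hδ (k / N) ((k + 1) / N) ⟨hkk, by linarith⟩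
      ⟨by linarith, hk1⟩ hk0 v
    have e : 2 * (((k : ℝ) + 1) / N) - k / N = (k + 1 + 1) / N := by ring
    rw [e] at st
    push_cast
    have e2 : ((k : ℝ) + 1 + 1) / N = (k + 1) / N + 1 / N := by ring
    set a := ((k : ℝ) + 1) / N
    set δ := hnorm (D y) d
    have p1 : 0 < 1 - a * δ := by nlinarith
    have p2 : 0 ≤ 1 - 1 / N * δ := by nlinarith
    have p3 : 0 ≤ 1 - (k + 1 + 1) / N * δ := by rw [e2]; nlinarith
    have j1 := mul_le_mul_of_nonneg_right i p3
    have j2 := mul_le_mul_of_nonneg_right st p2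
    refine le_of_mul_le_mul_right ?_ p1
    linarith

lemma sc_lower (hSC : SelfConcordantOn S D)
    (hseg : ∀ t ∈ Set.Icc (0 : ℝ) 1, y + t • d ∈ S) (hδ : hnorm (D y) d ≤ 1 / 4)
    (v : Fin n → ℝ) :
    hnorm (D y) v * (1 - hnorm (D y) d) ≤ hnorm (D (y + d)) v := by
  have h0 : 0 ≤ hnorm (D y) d := hnorm_nonneg' (D y) d
  have hv : 0 ≤ hnorm (D y) v := hnorm_nonneg' (D y) v
  have hv' : 0 ≤ hnorm (D (y + d)) v := hnorm_nonneg' _ v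
  have lim : Filter.Tendsto (fun N : ℕ => hnorm (D (y + d)) v +
      hnorm (D y) v * hnorm (D y) d * (1 / ((N : ℝ) + 1))) Filter.atTop
      (nhds (hnorm (D (y + d)) v + hnorm (D y) v * hnorm (D y) d * 0)) :=
    (tendsto_one_div_add_atTop_nhds_zero_nat.const_mul _).const_add _
  rw [mul_zero, add_zero] at lim
  refine ge_of_tendsto' lim fun N => ?_
  have := sc_iter hSC hseg hδ v (N + 1) (by omega) (N + 1) le_rfl
  have hp : ((N : ℝ) + 1) ≠ 0 := by positivity
  push_cast at this
  rw [div_self hp, one_smul, add_div, div_self hp] at this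
  have hq : 0 ≤ 1 / ((N : ℝ) + 1) := by positivity
  nlinarith [mul_nonneg hv' (mul_nonneg hq h0)]

lemma resid_bound (hPD : ∀ y ∈ S, (D y).PosDef) (hSC : SelfConcordantOn S D)
    (hseg : ∀ t ∈ Set.Icc (0 : ℝ) 1, y + t • d ∈ S) (hδ : hnorm (D y) d ≤ 1 / 4)
    {r : (Fin n → ℝ) → (Fin n → ℝ)}
    (hr : ∀ z ∈ S,
      HasFDerivWithinAt r ((D z).mulVecLin.toContinuousLinearMap) S z)
    (hd : r y = - (D y).mulVec d) (w : Fin n → ℝ) :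
    w ⬝ᵥ r (y + d) * (1 - hnorm (D y) d) ≤ hnorm (D y) w * hnorm (D y) d ^ 2 := by
  have hy : y ∈ S := by simpa using hseg 0 (by simp)
  have hform : ∀ t ∈ Set.Icc (0 : ℝ) 1, w ⬝ᵥ (D (y + t • d)).mulVec d - w ⬝ᵥ (D y).mulVec d ≤
      (1 / (1 - t * hnorm (D y) d) ^ 2 - 1) * (hnorm (D y) w * hnorm (D y) d) := by
    intro t ht
    have h0 : 0 ≤ hnorm (D y) d := hnorm_nonneg' (D y) d
    have hp : 0 < 1 - t * hnorm (D y) d := by nlinarith [ht.1, ht.2]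
    apply form_diff_le (hPD y hy) (hPD _ (hseg t ht))
    · intro v
      have := sc_upper hSC hseg hδ t ht v
      have h2 := pow_le_pow_left₀ (hnorm_nonneg' _ v) this 2
      rw [div_pow] at h2
      have : hnorm (D y) v ^ 2 / (1 - t * hnorm (D y) d) ^ 2 =
        1 / (1 - t * hnorm (D y) d) ^ 2 * hnorm (D y) v ^ 2 := by ring
      linarith
    · intro v
      have st := sc_step hSC hseg hδ 0 t (by simp) ht ht.1 v
      simp only [zero_smul, add_zero, sub_zero] at st
      have hv := hnorm_nonneg' (D y) v
      set x := t * hnorm (D y) d with hx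
      have hx0 : 0 ≤ x := mul_nonneg ht.1 h0
      have hx1 : x ≤ 1 / 4 := by nlinarith [ht.1, ht.2]
      have e : 1 - 2 * t * hnorm (D y) d = 1 - 2 * x := by rw [hx]; ring
      rw [e] at st
      have h2 := pow_le_pow_left₀ (mul_nonneg hv (by linarith)) st 2
      set A := hnorm (D y) v
      set B := hnorm (D (y + t • d)) v
      have hp2 : 0 < (1 - x) ^ 2 := by positivity
      refine le_of_mul_le_mul_right ?_ hp2
      have e3 : (1 / (1 - x) ^ 2 - 1) * A ^ 2 * (1 - x) ^ 2 = A ^ 2 - A ^ 2 * (1 - x) ^ 2 := by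
        field_simp
      rw [e3]
      nlinarith [mul_nonneg (sq_nonneg A) (sq_nonneg x)]
  set δ := hnorm (D y) d with hδd
  have h0 : 0 ≤ δ := hnorm_nonneg' (D y) d
  set W := hnorm (D y) w
  set c := w ⬝ᵥ (D y).mulVec d
  have hder : ∀ t ∈ Set.Icc (0 : ℝ) 1, HasDerivWithinAt
      (fun t : ℝ => w ⬝ᵥ r (y + t • d) - t * c - W * (1 / (1 - t * δ) - t * δ))
      (w ⬝ᵥ (D (y + t • d)).mulVec d - c - W * (δ / (1 - t * δ) ^ 2 - δ)) (Set.Icc 0 1) t := by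
    intro t ht
    have hp : 1 - t * δ ≠ 0 := by nlinarith [ht.1, ht.2]
    have hl : HasDerivWithinAt (fun t : ℝ => y + t • d) d (Set.Icc 0 1) t := by
      have := (((hasDerivAt_id t).smul_const d).const_add y).hasDerivWithinAt (s := Set.Icc 0 1)
      simpa using this
    have h1 := (hr _ (hseg t ht)).comp_hasDerivWithinAt t hl (fun s hs => hseg s hs)
    have h2 : HasDerivWithinAt (fun t : ℝ => w ⬝ᵥ r (y + t • d))
        (w ⬝ᵥ (D (y + t • d)).mulVec d) (Set.Icc 0 1) t := by
      have h3 := hasDerivWithinAt_pi.1 h1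
      simp only [dotProduct]
      exact HasDerivWithinAt.fun_sum fun i _ => (h3 i).const_mul (w i)
    have hlin : HasDerivAt (fun t : ℝ => t * δ) δ t := by
      simpa using (hasDerivAt_id t).mul_const δ
    have hlc : HasDerivAt (fun t : ℝ => t * c) c t := by
      simpa using (hasDerivAt_id t).mul_const c
    have h4 : HasDerivAt (fun t : ℝ => W * (1 / (1 - t * δ) - t * δ))
        (W * (δ / (1 - t * δ) ^ 2 - δ)) t := by
      have := (((hlin.const_sub 1).inv hp).sub hlin).const_mul W
      simpa [one_div] using this
    exact (h2.sub hlc.hasDerivWithinAt).sub h4.hasDerivWithinAt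
  have anti := antitoneOn_of_hasDerivWithinAt_nonpos (convex_Icc (0 : ℝ) 1)
    (fun t ht => (hder t ht).continuousWithinAt)
    (fun t ht => (hder t (interior_subset ht)).mono interior_subset)
    (fun t ht => by
      have h := hform t (interior_subset ht)
      have e : (1 / (1 - t * δ) ^ 2 - 1) * (W * δ) = W * (δ / (1 - t * δ) ^ 2 - δ) := by ring
      rw [e] at h
      linarith)
  have key := anti (Set.left_mem_Icc.2 zero_le_one) (Set.right_mem_Icc.2 zero_le_one) zero_le_one
  simp only [one_smul, zero_smul, add_zero, one_mul, zero_mul, sub_zero, hd, dotProduct_neg] at key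
  change _ ≤ -c - W * (1 / 1) at key
  have hp : 0 < 1 - δ := by linarith
  have k2 : w ⬝ᵥ r (y + d) ≤ W * (1 / (1 - δ) - δ - 1) := by linarith
  have k3 := mul_le_mul_of_nonneg_right k2 hp.le
  have e : W * (1 / (1 - δ) - δ - 1) * (1 - δ) = W * δ ^ 2 := by
    field_simp; ring
  linarith

end

theorem stmt_4 {n : ℕ} (S : Set (Fin n → ℝ)) (hS : Convex ℝ S)
    (D : (Fin n → ℝ) → Matrix (Fin n) (Fin n) ℝ)
    (hPD : ∀ y ∈ S, (D y).PosDef)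
    (hSC : SelfConcordantOn S D)
    (r : (Fin n → ℝ) → (Fin n → ℝ))
    (hr : ∀ z ∈ S,
      HasFDerivWithinAt r ((D z).mulVecLin.toContinuousLinearMap) S z)
    (y : Fin n → ℝ) (hy : y ∈ S)
    -- `n(y) := −D(y)⁻¹ r(y)`, `y⁺ := y + n(y)`, `δ := ‖n(y)‖_{D(y)}`
    (hδ : hnorm (D y) (-(D y)⁻¹.mulVec (r y)) ≤ 1/4)
    (hseg : segment ℝ y (y + -(D y)⁻¹.mulVec (r y)) ⊆ S) :
    hnorm (D (y + -(D y)⁻¹.mulVec (r y)))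
        (-(D (y + -(D y)⁻¹.mulVec (r y)))⁻¹.mulVec (r (y + -(D y)⁻¹.mulVec (r y)))) ≤
      1 / 9 := by
  set d := -(D y)⁻¹.mulVec (r y) with hd
  have hseg' : ∀ t ∈ Set.Icc (0 : ℝ) 1, y + t • d ∈ S := by
    intro t ht
    apply hseg
    rw [segment_eq_image']
    exact ⟨t, ht, by simp⟩
  have hyp : y + d ∈ S := by simpa using hseg' 1 (by simp)
  have inv : ∀ z ∈ S, (D z).mulVec ((D z)⁻¹.mulVec (r z)) = r z := by
    intro z hz
    rw [Matrix.mulVec_mulVec, Matrix.mul_nonsing_inv _ (hPD z hz).det_pos.ne'.isUnit,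
      Matrix.one_mulVec]
  have hd' : r y = - (D y).mulVec d := by
    rw [hd, Matrix.mulVec_neg, inv y hy, neg_neg]
  set w := (D (y + d))⁻¹.mulVec (r (y + d)) with hw
  have hneg : hnorm (D (y + d)) (-w) = hnorm (D (y + d)) w := by
    have := hnorm_smul' (D (y + d)) (-1) w
    simpa using this
  rw [hneg]
  have h1 := resid_bound hPD hSC hseg' hδ hr hd' w
  have h2 := sc_lower hSC hseg' hδ w
  have h3 := hnorm_sq' (hPD _ hyp) w
  rw [inv _ hyp] at h3
  rw [← h3] at h1
  have h0 := hnorm_nonneg' (D y) d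
  have hp0 := hnorm_nonneg' (D (y + d)) w
  have hW0 := hnorm_nonneg' (D y) w
  set p := hnorm (D (y + d)) w
  set δ := hnorm (D y) d
  set W := hnorm (D y) w
  by_contra hcon
  have hp : 1 / 9 < p := not_le.1 hcon
  have hpos : 0 < 1 - δ := by linarith
  have a1 : p ^ 2 * (1 - δ) ^ 2 ≤ p * δ ^ 2 := by
    have b1 := mul_le_mul_of_nonneg_right h1 hpos.le
    have b2 := mul_le_mul_of_nonneg_right h2 (sq_nonneg δ)
    nlinarith
  have a2 : p * (1 - δ) ^ 2 ≤ δ ^ 2 := by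
    refine le_of_mul_le_mul_left ?_ (by linarith : 0 < p)
    linarith
  have a3 : 9 * δ ^ 2 ≤ (1 - δ) ^ 2 := by nlinarith
  have a4 : 0 < (1 - δ) ^ 2 := by positivity
  nlinarith
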